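/- Assume A is standardized and let 1 ≤ β ≤ m. Let x ∈ range(Aᵀ), and for each subset τ ⊆ {1,…,m} of cardinality β let x_τ⁺ be the exact block Kaczmarz update of x with respect to τ. Assume D := Σ_τ min_{i∈τ} (A^{(i)}x − b_i)² > 0 and set ξ = (Σ_τ ‖A_τ x − b_τ‖₂²) / D. Then (1/C(m,β)) Σ_τ ‖x_τ⁺ − x⋆‖₂² ≤ (1 − (β/ξ)·λ_min⁺(AᵀA)/m) · ‖x − x⋆‖₂². -/

import Mathlib

open Matrix Finset

/-- The largest eigenvalue of a square real matrix (as the supremum of its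
eigenvalue set). -/
noncomputable def maxEig {k : ℕ} (M : Matrix (Fin k) (Fin k) ℝ) : ℝ :=
  sSup {μ : ℝ | Module.End.HasEigenvalue (Matrix.mulVecLin M) μ}

/-- The smallest positive eigenvalue of a square real matrix. -/
noncomputable def minPosEig {k : ℕ} (M : Matrix (Fin k) (Fin k) ℝ) : ℝ :=
  sInf {μ : ℝ | Module.End.HasEigenvalue (Matrix.mulVecLin M) μ ∧ 0 < μ}

/-- The restriction of `A` to the rows indexed by `I`. -/
def rowSub {m n : ℕ} (A : Matrix (Fin m) (Fin n) ℝ) (I : Finset (Fin m)) :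
    Matrix {i : Fin m // i ∈ I} (Fin n) ℝ :=
  fun i j => A i.1 j

/-- Squared Euclidean norm. -/
noncomputable def sqNorm {k : ℕ} (v : Fin k → ℝ) : ℝ := ∑ j, (v j) ^ 2

/-- `xp` is the exact block Kaczmarz update of `x` with respect to the row
index set `I`: it satisfies the equations indexed by `I` and minimizes the
distance to `x` among all such points (hence is the orthogonal projection of
`x` onto the affine solution set, which is the unique such minimizer). -/
def IsKaczmarzUpdate {m n : ℕ} (A : Matrix (Fin m) (Fin n) ℝ)
    (b : Fin m → ℝ) (I : Finset (Fin m)) (x xp : Fin n → ℝ) : Prop :=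
  (∀ i ∈ I, A i ⬝ᵥ xp = b i) ∧
  ∀ y : Fin n → ℝ, (∀ i ∈ I, A i ⬝ᵥ y = b i) → sqNorm (xp - x) ≤ sqNorm (y - x)

/-- `I` is a greedy `δ`-subset of `τ` for `x`: `I ⊆ τ`, `|I| = δ`, and the
residual entries on `I` dominate (in absolute value) those on `τ \ I`. -/
def IsGreedySubset {m n : ℕ} (A : Matrix (Fin m) (Fin n) ℝ) (b : Fin m → ℝ)
    (x : Fin n → ℝ) (δ : ℕ) (τ I : Finset (Fin m)) : Prop :=
  I ⊆ τ ∧ I.card = δ ∧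
    ∀ i ∈ I, ∀ j ∈ τ \ I, |A j ⬝ᵥ x - b j| ≤ |A i ⬝ᵥ x - b i|

/-!
An exact block update `x⁺` is an orthogonal projection, so by Pythagoras it decreases the squared
distance to a solution `y` by `‖x⁺ - x‖²`. As `x⁺` satisfies the equations of the block and the
rows have norm at most one, Cauchy–Schwarz bounds this decrease from below by the squared residual
`(A i ⬝ᵥ x - b i) ^ 2` of any row `i` of the block, in particular by the smallest one. On average
over the blocks the decrease is thus at least `D / C(m, β) = S / (ξ C(m, β))`, where `S` is the sum
over the blocks of the squared residual norms. Double counting gives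
`m S = β C(m, β) ‖A (x - y)‖²`, and `‖A (x - y)‖² ≥ λ_min⁺(Aᵀ A) ‖x - y‖²` because `x - y` lies in
the row space.
-/

section DoubleCounting

variable {α M : Type*} [AddCommMonoid M]

theorem sum_powersetCard_succ_sum (s : Finset α) (k : ℕ) (f : α → M) :
    ∑ t ∈ s.powersetCard (k + 1), ∑ i ∈ t, f i = (#s - 1).choose k • ∑ i ∈ s, f i := by
  classical
  have card_filter_mem {i : α} (hi : i ∈ s) :
      #{t ∈ s.powersetCard (k + 1) | i ∈ t} = (#s - 1).choose k := by
    simpa using card_filter_powersetCard_subset {i} s (k + 1) (by simpa using hi) (by simp)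
  calc ∑ t ∈ s.powersetCard (k + 1), ∑ i ∈ t, f i
      = ∑ i ∈ s, ∑ t ∈ s.powersetCard (k + 1) with i ∈ t, f i :=
        sum_comm' fun t i => by
          simp only [mem_filter, mem_powersetCard]
          exact ⟨fun h => ⟨h, h.1.1 h.2⟩, And.left⟩
    _ = ∑ i ∈ s, (#s - 1).choose k • f i :=
        sum_congr rfl fun i hi => by rw [sum_const, card_filter_mem hi]
    _ = (#s - 1).choose k • ∑ i ∈ s, f i := sum_nsmul ..

theorem card_nsmul_sum_powersetCard_sum (s : Finset α) (k : ℕ) (f : α → M) :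
    #s • ∑ t ∈ s.powersetCard k, ∑ i ∈ t, f i = (k * (#s).choose k) • ∑ i ∈ s, f i := by
  rcases k with _ | k
  · simp
  rcases s.eq_empty_or_nonempty with rfl | hs
  · simp
  obtain ⟨l, hl⟩ := Nat.exists_eq_add_of_le' hs.card_pos
  rw [sum_powersetCard_succ_sum, smul_smul, hl, Nat.add_sub_cancel, Nat.add_one_mul_choose_eq,
    mul_comm]

end DoubleCounting

section SqNorm

variable {k : ℕ}

theorem sqNorm_eq_dotProduct_self (v : Fin k → ℝ) : sqNorm v = v ⬝ᵥ v := by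
  simp only [sqNorm, dotProduct, sq]

theorem sqNorm_sub_comm (u v : Fin k → ℝ) : sqNorm (u - v) = sqNorm (v - u) :=
  sum_congr rfl fun j _ => sub_sq_comm (u j) (v j)

theorem sqNorm_add (u v : Fin k → ℝ) :
    sqNorm (u + v) = sqNorm u + 2 * (u ⬝ᵥ v) + sqNorm v := by
  simp only [sqNorm_eq_dotProduct_self, add_dotProduct, dotProduct_add, dotProduct_comm v u]
  ring

theorem sqNorm_smul (t : ℝ) (v : Fin k → ℝ) : sqNorm (t • v) = t ^ 2 * sqNorm v := by
  simp only [sqNorm, Pi.smul_apply, smul_eq_mul, mul_pow, mul_sum]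

theorem dotProduct_eq_zero_of_forall_sqNorm_le {u d : Fin k → ℝ}
    (h : ∀ t : ℝ, sqNorm u ≤ sqNorm (u + t • d)) : u ⬝ᵥ d = 0 := by
  have quadratic_nonneg (t : ℝ) : 0 ≤ sqNorm d * (t * t) + 2 * (u ⬝ᵥ d) * t + 0 := by
    have ht := h t
    rw [sqNorm_add, sqNorm_smul, dotProduct_smul, smul_eq_mul] at ht
    linarith
  have discrim_nonpos := discrim_le_zero quadratic_nonneg
  rw [discrim, mul_zero, sub_zero, sq_nonpos_iff] at discrim_nonpos
  linarith

end SqNorm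

theorem sum_dotProduct_mul_dotProduct {ι κ : Type*} [Fintype ι] [Fintype κ]
    (u : OrthonormalBasis ι ℝ (EuclideanSpace ℝ κ)) (v w : κ → ℝ) :
    ∑ i, ((u i).ofLp ⬝ᵥ v) * ((u i).ofLp ⬝ᵥ w) = v ⬝ᵥ w := by
  have parseval := u.sum_inner_mul_inner (WithLp.toLp 2 v) (WithLp.toLp 2 w)
  simp only [EuclideanSpace.inner_eq_star_dotProduct, star_trivial] at parseval
  simpa only [dotProduct_comm w] using parseval

theorem minPosEig_le {k : ℕ} {M : Matrix (Fin k) (Fin k) ℝ} {μ : ℝ}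
    (hμ : Module.End.HasEigenvalue M.mulVecLin μ) (hpos : 0 < μ) : minPosEig M ≤ μ :=
  csInf_le ⟨0, fun _ hν => hν.2.le⟩ ⟨hμ, hpos⟩

theorem minPosEig_mul_sqNorm_le_of_posSemidef {k : ℕ} {M : Matrix (Fin k) (Fin k) ℝ}
    (hM : M.PosSemidef) {v : Fin k → ℝ} (hv : ∀ w, M *ᵥ w = 0 → w ⬝ᵥ v = 0) :
    minPosEig M * sqNorm v ≤ v ⬝ᵥ (M *ᵥ v) := by
  let μ : Fin k → ℝ := hM.isHermitian.eigenvalues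
  let u : Fin k → Fin k → ℝ := fun i => (hM.isHermitian.eigenvectorBasis i).ofLp
  have parseval (w : Fin k → ℝ) : ∑ i, (u i ⬝ᵥ v) * (u i ⬝ᵥ w) = v ⬝ᵥ w :=
    sum_dotProduct_mul_dotProduct hM.isHermitian.eigenvectorBasis v w
  have mulVec_u (i : Fin k) : M *ᵥ u i = μ i • u i := hM.isHermitian.mulVec_eigenvectorBasis i
  have hasEigenvalue_μ (i : Fin k) : Module.End.HasEigenvalue M.mulVecLin (μ i) := by
    rw [Module.End.hasEigenvalue_iff_mem_spectrum, ← toLin'_apply', spectrum_toLin']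
    exact hM.isHermitian.eigenvalues_mem_spectrum_real i
  have dotProduct_mulVec_u (i : Fin k) : u i ⬝ᵥ (M *ᵥ v) = μ i * (u i ⬝ᵥ v) := by
    rw [dotProduct_mulVec, ← mulVec_transpose, ← conjTranspose_eq_transpose_of_trivial,
      hM.isHermitian.eq, mulVec_u, smul_dotProduct, smul_eq_mul]
  have termwise (i : Fin k) : minPosEig M * (u i ⬝ᵥ v) ^ 2 ≤ μ i * (u i ⬝ᵥ v) ^ 2 := by
    rcases (hM.eigenvalues_nonneg i).eq_or_lt with hzero | hpos
    · have hker : M *ᵥ u i = 0 := by rw [mulVec_u, show μ i = 0 from hzero.symm, zero_smul]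
      simp [hv _ hker]
    · exact mul_le_mul_of_nonneg_right (minPosEig_le (hasEigenvalue_μ i) hpos) (sq_nonneg _)
  calc minPosEig M * sqNorm v
      = ∑ i, minPosEig M * (u i ⬝ᵥ v) ^ 2 := by
        simp only [sqNorm_eq_dotProduct_self, ← parseval, mul_sum, sq]
    _ ≤ ∑ i, μ i * (u i ⬝ᵥ v) ^ 2 := sum_le_sum fun i _ => termwise i
    _ = ∑ i, (u i ⬝ᵥ v) * (u i ⬝ᵥ (M *ᵥ v)) :=
        sum_congr rfl fun i _ => by rw [dotProduct_mulVec_u]; ring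
    _ = v ⬝ᵥ (M *ᵥ v) := parseval _

theorem minPosEig_transpose_mul_self_mul_sqNorm_le {m n : ℕ} (A : Matrix (Fin m) (Fin n) ℝ)
    {v : Fin n → ℝ} (hv : v ∈ Set.range Aᵀ.mulVec) :
    minPosEig (Aᵀ * A) * sqNorm v ≤ sqNorm (A *ᵥ v) := by
  have posSemidef : (Aᵀ * A).PosSemidef := by
    simpa only [conjTranspose_eq_transpose_of_trivial] using posSemidef_conjTranspose_mul_self A
  have orthogonal_ker (w : Fin n → ℝ) (hw : (Aᵀ * A) *ᵥ w = 0) : w ⬝ᵥ v = 0 := by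
    obtain ⟨z, rfl⟩ := hv
    rw [← conjTranspose_eq_transpose_of_trivial, conjTranspose_mul_self_mulVec_eq_zero] at hw
    rw [dotProduct_mulVec, vecMul_transpose, hw, zero_dotProduct]
  calc minPosEig (Aᵀ * A) * sqNorm v
      ≤ v ⬝ᵥ ((Aᵀ * A) *ᵥ v) := minPosEig_mul_sqNorm_le_of_posSemidef posSemidef orthogonal_ker
    _ = sqNorm (A *ᵥ v) := by
        rw [sqNorm_eq_dotProduct_self, ← mulVec_mulVec, dotProduct_mulVec, vecMul_transpose]

section BlockKaczmarz

variable {m n : ℕ} {A : Matrix (Fin m) (Fin n) ℝ} {b : Fin m → ℝ} {x y : Fin n → ℝ}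

namespace IsKaczmarzUpdate

variable {I : Finset (Fin m)} {xp : Fin n → ℝ}

theorem dotProduct_eq_zero (h : IsKaczmarzUpdate A b I x xp) {d : Fin n → ℝ}
    (hd : ∀ i ∈ I, A i ⬝ᵥ d = 0) : (xp - x) ⬝ᵥ d = 0 := by
  refine dotProduct_eq_zero_of_forall_sqNorm_le fun t => ?_
  have feasible (i : Fin m) (hi : i ∈ I) : A i ⬝ᵥ (xp + t • d) = b i := by
    rw [dotProduct_add, dotProduct_smul, hd i hi, smul_zero, add_zero, h.1 i hi]
  simpa only [sub_add_eq_add_sub] using h.2 _ feasible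

theorem sqNorm_sub_add_sqNorm_sub (h : IsKaczmarzUpdate A b I x xp)
    (hy : ∀ i ∈ I, A i ⬝ᵥ y = b i) :
    sqNorm (xp - x) + sqNorm (xp - y) = sqNorm (x - y) := by
  have orthogonal : (xp - x) ⬝ᵥ (y - xp) = 0 :=
    h.dotProduct_eq_zero fun i hi => by rw [dotProduct_sub, hy i hi, h.1 i hi, sub_self]
  rw [sqNorm_sub_comm x, sqNorm_sub_comm xp y, ← sub_add_sub_cancel' xp x y, sqNorm_add,
    orthogonal, mul_zero, add_zero]

theorem sq_residual_le (h : IsKaczmarzUpdate A b I x xp) {i : Fin m} (hi : i ∈ I) :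
    (A i ⬝ᵥ x - b i) ^ 2 ≤ sqNorm (A i) * sqNorm (xp - x) :=
  calc (A i ⬝ᵥ x - b i) ^ 2
      = (A i ⬝ᵥ (xp - x)) ^ 2 := by rw [dotProduct_sub, h.1 i hi, sub_sq_comm]
    _ ≤ sqNorm (A i) * sqNorm (xp - x) := sum_mul_sq_le_sq_mul_sq _ _ _

theorem sqNorm_sub_le_sub_sq_residual (h : IsKaczmarzUpdate A b I x xp)
    (hy : ∀ i ∈ I, A i ⬝ᵥ y = b i) {i : Fin m} (hi : i ∈ I) (hrow : sqNorm (A i) ≤ 1) :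
    sqNorm (xp - y) ≤ sqNorm (x - y) - (A i ⬝ᵥ x - b i) ^ 2 := by
  have sq_residual_le_sqNorm : (A i ⬝ᵥ x - b i) ^ 2 ≤ sqNorm (xp - x) :=
    (h.sq_residual_le hi).trans
      (mul_le_of_le_one_left (sum_nonneg fun _ _ => sq_nonneg _) hrow)
  linarith [h.sqNorm_sub_add_sqNorm_sub hy]

theorem sqNorm_sub_le_sub_sInf_sq_residual (h : IsKaczmarzUpdate A b I x xp)
    (hy : ∀ i ∈ I, A i ⬝ᵥ y = b i) (hI : I.Nonempty) (hrow : ∀ i ∈ I, sqNorm (A i) ≤ 1) :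
    sqNorm (xp - y) ≤ sqNorm (x - y) - sInf ((fun i => (A i ⬝ᵥ x - b i) ^ 2) '' ↑I) := by
  obtain ⟨i, hi, hmin⟩ := (hI.to_set.image _).csInf_mem
    (I.finite_toSet.image fun i => (A i ⬝ᵥ x - b i) ^ 2)
  rw [← hmin]
  exact h.sqNorm_sub_le_sub_sq_residual hy hi (hrow i hi)

end IsKaczmarzUpdate

theorem mul_minPosEig_mul_sqNorm_le_sum_sq_residual (hy : A *ᵥ y = b)
    (hxy : x - y ∈ Set.range Aᵀ.mulVec) (β : ℕ) :
    β * m.choose β * (minPosEig (Aᵀ * A) * sqNorm (x - y)) ≤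
      m * ∑ τ ∈ powersetCard β (univ : Finset (Fin m)), ∑ i ∈ τ, (A i ⬝ᵥ x - b i) ^ 2 := by
  have sum_sq_residual : ∑ i, (A i ⬝ᵥ x - b i) ^ 2 = sqNorm (A *ᵥ (x - y)) := by
    rw [mulVec_sub, hy]
    rfl
  have double_counting :
      m * ∑ τ ∈ powersetCard β (univ : Finset (Fin m)), ∑ i ∈ τ, (A i ⬝ᵥ x - b i) ^ 2 =
        β * m.choose β * sqNorm (A *ᵥ (x - y)) := by
    simpa only [← sum_sq_residual, card_univ, Fintype.card_fin, nsmul_eq_mul, Nat.cast_mul] using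
      card_nsmul_sum_powersetCard_sum univ β fun i => (A i ⬝ᵥ x - b i) ^ 2
  rw [double_counting]
  gcongr
  exact minPosEig_transpose_mul_self_mul_sqNorm_le A hxy

theorem sum_sqNorm_sub_le (hy : A *ᵥ y = b) (hrow : ∀ i, sqNorm (A i) ≤ 1) {β : ℕ} (hβ : 1 ≤ β)
    {xp : Finset (Fin m) → Fin n → ℝ}
    (hxp : ∀ τ ∈ powersetCard β (univ : Finset (Fin m)), IsKaczmarzUpdate A b τ x (xp τ)) :
    ∑ τ ∈ powersetCard β (univ : Finset (Fin m)), sqNorm (xp τ - y) ≤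
      m.choose β * sqNorm (x - y) -
        ∑ τ ∈ powersetCard β (univ : Finset (Fin m)),
          sInf ((fun i => (A i ⬝ᵥ x - b i) ^ 2) '' ↑τ) :=
  calc ∑ τ ∈ powersetCard β (univ : Finset (Fin m)), sqNorm (xp τ - y)
      ≤ ∑ τ ∈ powersetCard β (univ : Finset (Fin m)),
          (sqNorm (x - y) - sInf ((fun i => (A i ⬝ᵥ x - b i) ^ 2) '' ↑τ)) :=
        sum_le_sum fun τ hτ =>
          (hxp τ hτ).sqNorm_sub_le_sub_sInf_sq_residual (fun i _ => congrFun hy i)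
            (card_pos.1 (by rw [(mem_powersetCard.1 hτ).2]; exact hβ)) fun i _ => hrow i
    _ = _ := by
        rw [sum_sub_distrib, sum_const, card_powersetCard, card_univ, Fintype.card_fin,
          nsmul_eq_mul]

theorem rbk_one_step_standardized_general (β : ℕ) (hβ1 : 1 ≤ β) (hβm : β ≤ m)
    (hrow : ∀ i, sqNorm (A i) ≤ 1) (hy : A *ᵥ y = b) (hxy : x - y ∈ Set.range Aᵀ.mulVec)
    (xp : Finset (Fin m) → Fin n → ℝ)
    (hxp : ∀ τ ∈ powersetCard β (univ : Finset (Fin m)), IsKaczmarzUpdate A b τ x (xp τ))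
    (D : ℝ)
    (hD : D = ∑ τ ∈ powersetCard β (univ : Finset (Fin m)),
      sInf ((fun i => (A i ⬝ᵥ x - b i) ^ 2) '' ↑τ))
    (hDpos : 0 < D)
    (ξ : ℝ)
    (hξ : ξ = (∑ τ ∈ powersetCard β univ, ∑ i ∈ τ, (A i ⬝ᵥ x - b i) ^ 2) / D) :
    (1 / (m.choose β : ℝ)) * ∑ τ ∈ powersetCard β (univ : Finset (Fin m)), sqNorm (xp τ - y) ≤
      (1 - ((β : ℝ) / ξ) * (minPosEig (Aᵀ * A) / (m : ℝ))) * sqNorm (x - y) := by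
  set S := ∑ τ ∈ powersetCard β (univ : Finset (Fin m)), ∑ i ∈ τ, (A i ⬝ᵥ x - b i) ^ 2
  have choose_pos : (0 : ℝ) < m.choose β := by exact_mod_cast Nat.choose_pos hβm
  have S_nonneg : 0 ≤ S := sum_nonneg fun _ _ => sum_nonneg fun _ _ => sq_nonneg _
  have rate_le : β / ξ * (minPosEig (Aᵀ * A) / m) * sqNorm (x - y) ≤ D / m.choose β :=
    calc β / ξ * (minPosEig (Aᵀ * A) / m) * sqNorm (x - y)
        = D / m.choose β *
            (β * m.choose β * (minPosEig (Aᵀ * A) * sqNorm (x - y)) / (m * S)) := by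
          rw [hξ]
          field_simp
      _ ≤ D / m.choose β := mul_le_of_le_one_right (by positivity) <|
          div_le_one_of_le₀ (mul_minPosEig_mul_sqNorm_le_sum_sq_residual hy hxy β)
            (mul_nonneg m.cast_nonneg S_nonneg)
  calc 1 / (m.choose β : ℝ) * ∑ τ ∈ powersetCard β (univ : Finset (Fin m)), sqNorm (xp τ - y)
      ≤ 1 / m.choose β * (m.choose β * sqNorm (x - y) - D) := by
        rw [hD]
        gcongr
        exact sum_sqNorm_sub_le hy hrow hβ1 hxp
    _ = sqNorm (x - y) - D / m.choose β := by field_simp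
    _ ≤ _ := by linarith

end BlockKaczmarz

theorem rbk_one_step_standardized {m n : ℕ} (β : ℕ) (hβ1 : 1 ≤ β) (hβm : β ≤ m)
    (A : Matrix (Fin m) (Fin n) ℝ) (hA : A ≠ 0)
    (hstd : ∀ i : Fin m, ∑ j, (A i j) ^ 2 = 1)
    (b : Fin m → ℝ)
    (xstar : Fin n → ℝ) (hconsistent : A.mulVec xstar = b)
    (hxstar : xstar ∈ Set.range Aᵀ.mulVec)
    (x : Fin n → ℝ) (hx : x ∈ Set.range Aᵀ.mulVec)
    (xp : Finset (Fin m) → Fin n → ℝ)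
    (hxp : ∀ τ ∈ Finset.powersetCard β (Finset.univ : Finset (Fin m)),
      IsKaczmarzUpdate A b τ x (xp τ))
    (D : ℝ)
    (hD : D = ∑ τ ∈ Finset.powersetCard β (Finset.univ : Finset (Fin m)),
      sInf ((fun i => (A i ⬝ᵥ x - b i) ^ 2) '' ↑τ))
    (hDpos : 0 < D)
    (ξ : ℝ)
    (hξ : ξ = (∑ τ ∈ Finset.powersetCard β (Finset.univ : Finset (Fin m)),
      ∑ i ∈ τ, (A i ⬝ᵥ x - b i) ^ 2) / D) :
    (1 / (m.choose β : ℝ)) *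
        ∑ τ ∈ Finset.powersetCard β (Finset.univ : Finset (Fin m)),
          sqNorm (xp τ - xstar) ≤
      (1 - ((β : ℝ) / ξ) * (minPosEig (Aᵀ * A) / (m : ℝ))) * sqNorm (x - xstar) := by
  exact rbk_one_step_standardized_general β hβ1 hβm (fun i => (hstd i).le) hconsistent
    (Submodule.sub_mem (LinearMap.range Aᵀ.mulVecLin) hx hxstar) xp hxp D hD hDpos ξ hξ
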